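/- If λ is a real number and y : [0,1] → ℝ is a twice continuously differentiable function, not identically zero, satisfying -y''(x) = λ * (1+x)^(-2) * y(x) for all x in [0,1] together with y(0) = y(1) = 0, then there exists a positive integer n such that λ = 1/4 + (n*π/log 2)^2. -/

import Mathlib

open Real

lemma sl_wronskian (mu : ℝ) (y z : ℝ → ℝ)
    (hy : ∀ x ∈ Set.Icc (0 : ℝ) 1, HasDerivWithinAt y (z x) (Set.Icc 0 1) x)
    (hz : ∀ x ∈ Set.Icc (0 : ℝ) 1,
      HasDerivWithinAt z (-((mu + 1 / 4) / (1 + x) ^ 2 * y x)) (Set.Icc 0 1) x)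
    (hy0 : y 0 = 0)
    (f g : ℝ → ℝ) (hf : ∀ t, HasDerivAt f (g t) t) (hg : ∀ t, HasDerivAt g (-(mu * f t)) t) :
    ∀ x ∈ Set.Icc (0 : ℝ) 1,
      √(1 + x) * (f (log (1 + x)) * z x
        - (f (log (1 + x)) / 2 + g (log (1 + x))) / (1 + x) * y x) = f 0 * z 0 := by
  have key : ∀ x ∈ Set.Icc (0 : ℝ) 1, HasDerivWithinAt
      (fun x => √(1 + x) * (f (log (1 + x)) * z x
        - (f (log (1 + x)) / 2 + g (log (1 + x))) / (1 + x) * y x)) 0 (Set.Icc 0 1) x := by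
    intro x hx
    have hp : 0 < 1 + x := by linarith [hx.1]
    have h1 : HasDerivAt (fun x : ℝ => 1 + x) 1 x := (hasDerivAt_id x).const_add 1
    have hs := h1.sqrt hp.ne'
    have hl := h1.log hp.ne'
    have hF : HasDerivAt (fun x => f (log (1 + x))) _ x := (hf (log (1 + x))).comp x hl
    have hG : HasDerivAt (fun x => g (log (1 + x))) _ x := (hg (log (1 + x))).comp x hl
    have := hs.hasDerivWithinAt.mul ((hF.hasDerivWithinAt.mul (hz x hx)).sub
      ((((hF.div_const 2).add hG).div h1 hp.ne').hasDerivWithinAt.mul (hy x hx)))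
    refine this.congr_deriv ?_
    have hsp : 0 < √(1 + x) := Real.sqrt_pos.2 hp
    have hsq : √(1 + x) ^ 2 = 1 + x := Real.sq_sqrt hp.le
    simp only [Pi.add_apply, Pi.mul_apply, Pi.sub_apply, Pi.div_apply]
    generalize √(1 + x) = s at *
    generalize f (log (1 + x)) = F at *
    generalize g (log (1 + x)) = G at *
    rw [← hsq]
    field_simp
    ring
  intro x hx
  have := constant_of_derivWithin_zero (fun x hx => (key x hx).differentiableWithinAt)
    (fun x hx => (key x ⟨hx.1, hx.2.le⟩).derivWithin
      (uniqueDiffOn_Icc zero_lt_one x ⟨hx.1, hx.2.le⟩)) x hx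
  simpa [hy0] using this

lemma sl_zero (mu : ℝ) (y z : ℝ → ℝ)
    (hy : ∀ x ∈ Set.Icc (0 : ℝ) 1, HasDerivWithinAt y (z x) (Set.Icc 0 1) x)
    (hz : ∀ x ∈ Set.Icc (0 : ℝ) 1,
      HasDerivWithinAt z (-((mu + 1 / 4) / (1 + x) ^ 2 * y x)) (Set.Icc 0 1) x)
    (hy0 : y 0 = 0) (hy1 : y 1 = 0) (hnz : ¬ (∀ x ∈ Set.Icc (0 : ℝ) 1, y x = 0))
    (f g : ℝ → ℝ) (hf : ∀ t, HasDerivAt f (g t) t) (hg : ∀ t, HasDerivAt g (-(mu * f t)) t)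
    (hf0 : f 0 = 0) (hg0 : g 0 = 1) (hinv : ∀ t, g t ^ 2 + mu * f t ^ 2 = 1) :
    f (log 2) = 0 := by
  have key : ∀ x ∈ Set.Icc (0 : ℝ) 1, √(1 + x) / (1 + x) * y x = z 0 * f (log (1 + x)) := by
    intro x hx
    have e1 := sl_wronskian mu y z hy hz hy0 f g hf hg x hx
    have e2 := sl_wronskian mu y z hy hz hy0 g (fun t => -(mu * f t)) hg
      (fun t => ((hf t).const_mul mu).neg) x hx
    rw [hf0] at e1
    rw [hg0] at e2
    have := hinv (log (1 + x))
    linear_combination f (log (1 + x)) * e2 - g (log (1 + x)) * e1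
      - √(1 + x) / (1 + x) * y x * this
  by_contra h
  have hc : z 0 = 0 := by
    have := key 1 (by simp)
    rw [hy1] at this
    norm_num at this
    tauto
  apply hnz
  intro x hx
  have hp : 0 < 1 + x := by linarith [hx.1]
  have := key x hx
  rw [hc, zero_mul] at this
  exact (mul_eq_zero.1 this).resolve_left (div_pos (Real.sqrt_pos.2 hp) hp).ne'

/-- If `λ` is real and `y : [0,1] → ℝ` is twice continuously differentiable, not
identically zero, satisfies `-y''(x) = λ * (1+x)^(-2) * y(x)` on `[0,1]` and
`y(0) = y(1) = 0`, then `λ = 1/4 + (n*π/log 2)^2` for some positive integer `n`. -/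
theorem sturm_liouville_eigenvalues_exact
    (lam : ℝ) (y : ℝ → ℝ)
    (hreg : ContDiffOn ℝ 2 y (Set.Icc (0 : ℝ) 1))
    (hnz : ¬ (∀ x ∈ Set.Icc (0 : ℝ) 1, y x = 0))
    (hode : ∀ x ∈ Set.Icc (0 : ℝ) 1,
      -(iteratedDerivWithin 2 y (Set.Icc (0 : ℝ) 1) x) = lam * (1 + x) ^ (-2 : ℤ) * y x)
    (hbc0 : y 0 = 0) (hbc1 : y 1 = 0) :
    ∃ n : ℕ, 0 < n ∧ lam = 1 / 4 + (n * π / Real.log 2) ^ 2 := by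
  have hu : UniqueDiffOn ℝ (Set.Icc (0 : ℝ) 1) := uniqueDiffOn_Icc zero_lt_one
  have hy : ∀ x ∈ Set.Icc (0 : ℝ) 1,
      HasDerivWithinAt y (derivWithin y (Set.Icc 0 1) x) (Set.Icc 0 1) x := fun x hx =>
    (hreg.differentiableOn (by norm_num) x hx).hasDerivWithinAt
  have hz : ∀ x ∈ Set.Icc (0 : ℝ) 1, HasDerivWithinAt (derivWithin y (Set.Icc 0 1))
      (-(((lam - 1 / 4) + 1 / 4) / (1 + x) ^ 2 * y x)) (Set.Icc 0 1) x := by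
    intro x hx
    have h1 : ContDiffOn ℝ 1 (derivWithin y (Set.Icc 0 1)) (Set.Icc 0 1) :=
      hreg.derivWithin hu (by norm_num)
    have h2 := (h1.differentiableOn (by norm_num) x hx).hasDerivWithinAt
    refine h2.congr_deriv ?_
    have h3 := hode x hx
    rw [iteratedDerivWithin_succ,
      iteratedDerivWithin_one] at h3
    rw [zpow_neg] at h3
    have h4 : (1 + x) ^ (2 : ℤ) = (1 + x) ^ 2 := by norm_cast
    rw [h4] at h3
    linear_combination -h3
  have hl : 0 < log 2 := Real.log_pos (by norm_num)
  have main := sl_zero (lam - 1 / 4) y _ hy hz hbc0 hbc1 hnz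
  rcases lt_trichotomy (lam - 1 / 4) 0 with hm | hm | hm
  · exfalso
    obtain ⟨w, hw, hw2⟩ : ∃ w : ℝ, 0 < w ∧ w ^ 2 = -(lam - 1 / 4) :=
      ⟨√(-(lam - 1 / 4)), Real.sqrt_pos.2 (by linarith), Real.sq_sqrt (by linarith)⟩
    have hlin : ∀ t : ℝ, HasDerivAt (fun t => w * t) w t := fun t => by
      simpa using (hasDerivAt_id t).const_mul w
    have := main (fun t => sinh (w * t) / w) (fun t => cosh (w * t))
      (fun t => ((hlin t).sinh.div_const w).congr_deriv (by field_simp))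
      (fun t => (hlin t).cosh.congr_deriv (by
        have h5 : lam - 1 / 4 = - w ^ 2 := by linarith
        rw [h5]
        field_simp))
      (by simp) (by simp)
      (fun t => by
        have h := Real.cosh_sq (w * t)
        have h5 : lam - 1 / 4 = - w ^ 2 := by linarith
        rw [h5]
        field_simp
        linarith)
    have h6 : 0 < sinh (w * log 2) / w := div_pos (Real.sinh_pos_iff.2 (by positivity)) hw
    exact h6.ne' this
  · exfalso
    have := main (fun t => t) (fun _ => 1) (fun t => hasDerivAt_id t)
      (fun t => by rw [hm]; simpa using hasDerivAt_const t (1 : ℝ)) rfl rfl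
      (fun t => by rw [hm]; ring)
    exact hl.ne' this
  · obtain ⟨w, hw, hw2⟩ : ∃ w : ℝ, 0 < w ∧ w ^ 2 = lam - 1 / 4 :=
      ⟨√(lam - 1 / 4), Real.sqrt_pos.2 hm, Real.sq_sqrt hm.le⟩
    have hlin : ∀ t : ℝ, HasDerivAt (fun t => w * t) w t := fun t => by
      simpa using (hasDerivAt_id t).const_mul w
    have := main (fun t => sin (w * t) / w) (fun t => cos (w * t))
      (fun t => ((hlin t).sin.div_const w).congr_deriv (by field_simp))
      (fun t => (hlin t).cos.congr_deriv (by
        rw [← hw2]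
        field_simp))
      (by simp) (by simp)
      (fun t => by
        have h := Real.sin_sq_add_cos_sq (w * t)
        rw [← hw2]
        field_simp
        linarith)
    have h7 : sin (w * log 2) = 0 := (div_eq_zero_iff.1 this).resolve_right hw.ne'
    obtain ⟨n, hn⟩ := Real.sin_eq_zero_iff.1 h7
    have hpos : 0 < (n : ℝ) * π := by rw [hn]; positivity
    have hn0 : 0 < n := by
      have := pos_of_mul_pos_left hpos pi_pos.le
      exact_mod_cast this
    lift n to ℕ using hn0.le
    refine ⟨n, by exact_mod_cast hn0, ?_⟩
    have h8 : (n : ℝ) * π = w * log 2 := by exact_mod_cast hn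
    rw [h8, mul_div_assoc, div_self hl.ne', mul_one, hw2]
    ring
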